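/- Let $f(u) = \int_0^u \frac{g(\xi)}{|u-\xi|^{\delta} |\xi|^{\beta} |u|^{\alpha}}\,d\xi$ for $u > 0$, where $1 < r < q < \infty$, $\alpha + \beta + \delta = 1 - (\frac{1}{r} - \frac{1}{q})$, $\alpha + \beta \ge 0$, and $\alpha + \delta > \frac{1}{q}$. Then there is a constant $C$ (depending only on the exponents) such that $\|f\|_{L^q((0,\infty))} \le C \|g\|_{L^r((0,\infty))}$ for all measurable $g$ on $(0,\infty)$. -/

import Mathlib

open MeasureTheory Set NNReal

/-!
Near the diagonal `u / 2 ≤ ξ < u` the kernel is at most a constant times `(u - ξ)^(-(α + β + δ))`,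
because `α + β ≥ 0`. This kernel lies in weak `L^l`, where `1 / l = α + β + δ`, in each variable
separately. Cutting it at a height adapted to the level `t` bounds the distribution function of
`f` at `t` by an integral of `g` over `{g > t^(q / r)}`, and integrating in `t` gives the
`L^r → L^q` estimate.

Away from the diagonal the kernel is at most a constant times `u^(-(α + δ)) ξ^(-β)`. The condition
`α + δ > 1 / q` amounts to `β < 1 - 1 / r`, which leaves room for a small power `ξ^ε` in Hölder's
inequality; Tonelli's theorem then integrates out `u`.
-/

open scoped ENNReal

section PowerIntegrals

theorem lintegral_Ioo_rpow_sub_one {p R : ℝ} (hp : 0 < p) (hR : 0 ≤ R) :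
    ∫⁻ t in Ioo 0 R, ENNReal.ofReal (t ^ (p - 1)) = ENNReal.ofReal (R ^ p / p) := by
  have hint : IntegrableOn (fun t : ℝ => t ^ (p - 1)) (Ioc 0 R) :=
    (intervalIntegrable_iff_integrableOn_Ioc_of_le hR).1
      (intervalIntegral.intervalIntegrable_rpow' (by linarith))
  rw [restrict_Ioo_eq_restrict_Ioc, ← ofReal_integral_eq_lintegral_ofReal hint,
    ← intervalIntegral.integral_of_le hR, integral_rpow (Or.inl (by linarith)), sub_add_cancel,
    Real.zero_rpow hp.ne', sub_zero]
  filter_upwards [ae_restrict_mem measurableSet_Ioc] with t ht using Real.rpow_nonneg ht.1.le _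

theorem lintegral_Ioi_rpow_neg_sub_one {p R : ℝ} (hp : 0 < p) (hR : 0 < R) :
    ∫⁻ t in Ioi R, ENNReal.ofReal (t ^ (-p - 1)) = ENNReal.ofReal (R ^ (-p) / p) := by
  rw [← ofReal_integral_eq_lintegral_ofReal (integrableOn_Ioi_rpow_of_lt (by linarith) hR),
    integral_Ioi_rpow_of_lt (by linarith) hR, sub_add_cancel, neg_div_neg_eq]
  filter_upwards [ae_restrict_mem measurableSet_Ioi] with t ht
    using Real.rpow_nonneg (hR.trans ht).le _

theorem lintegral_Ioi_zero_rpow (p : ℝ) :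
    ∫⁻ t in Ioi (0 : ℝ), ENNReal.ofReal (t ^ p) = ∞ := by
  by_contra hfin
  refine not_integrableOn_Ioi_rpow p ((lintegral_ofReal_ne_top_iff_integrable ?_ ?_).1 hfin)
  · fun_prop
  · filter_upwards [ae_restrict_mem measurableSet_Ioi] with t ht using Real.rpow_nonneg ht.le _

end PowerIntegrals

section WeakLp

variable {X : Type*} [MeasurableSpace X] {μ : Measure X}

theorem measurable_meas_ofReal_lt (f : X → ℝ≥0∞) :
    Measurable fun t : ℝ => μ {x | ENNReal.ofReal t < f x} :=
  Antitone.measurable fun _ _ hst => measure_mono fun _ hx =>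
    (ENNReal.ofReal_le_ofReal hst).trans_lt hx

theorem lintegral_rpow_eq_lintegral_meas_ofReal_lt_mul {f : X → ℝ≥0∞} (hf : AEMeasurable f μ)
    {p : ℝ} (hp : 0 < p) :
    ∫⁻ x, f x ^ p ∂μ = ENNReal.ofReal p *
      ∫⁻ t in Ioi (0 : ℝ), μ {x | ENNReal.ofReal t < f x} * ENNReal.ofReal (t ^ (p - 1)) := by
  by_cases hfin : ∀ᵐ x ∂μ, f x ≠ ∞
  · have hlhs : ∫⁻ x, f x ^ p ∂μ = ∫⁻ x, ENNReal.ofReal ((f x).toReal ^ p) ∂μ := by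
      refine lintegral_congr_ae ?_
      filter_upwards [hfin] with x hx
      rw [← ENNReal.ofReal_rpow_of_nonneg ENNReal.toReal_nonneg hp.le, ENNReal.ofReal_toReal hx]
    rw [hlhs, lintegral_rpow_eq_lintegral_meas_lt_mul μ (ae_of_all _ fun _ => ENNReal.toReal_nonneg)
      hf.ennreal_toReal hp]
    congr 1
    refine setLIntegral_congr_fun measurableSet_Ioi fun t (ht : 0 < t) => ?_
    congr 1
    refine measure_congr ?_
    filter_upwards [hfin] with x hx
    exact propext (ENNReal.ofReal_lt_iff_lt_toReal ht.le hx).symm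
  · have htop : μ {x | f x = ∞} ≠ 0 := fun h => hfin (by simpa [ae_iff] using h)
    have hlhs : ∫⁻ x, f x ^ p ∂μ = ∞ := by
      refine lintegral_eq_top_of_measure_eq_top_ne_zero (by fun_prop) ?_
      simpa [ENNReal.rpow_eq_top_iff_of_pos hp] using htop
    have hrhs : ∞ ≤ ∫⁻ t in Ioi (0 : ℝ),
        μ {x | ENNReal.ofReal t < f x} * ENNReal.ofReal (t ^ (p - 1)) :=
      calc ∞ = ∫⁻ t in Ioi (0 : ℝ), μ {x | f x = ∞} * ENNReal.ofReal (t ^ (p - 1)) := by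
            rw [lintegral_const_mul _ (by fun_prop), lintegral_Ioi_zero_rpow, ENNReal.mul_top htop]
        _ ≤ _ := by
            refine lintegral_mono fun t => ?_
            gcongr with x
            intro hx
            simp [hx]
    rw [hlhs, top_le_iff.1 hrhs, ENNReal.mul_top (by simpa using hp)]

/-- `f` lies in weak `L^l(μ)`: its distribution function satisfies `μ {f > t} ≤ A t^(-l)`. -/
def WeakLpBound (f : X → ℝ≥0∞) (l : ℝ) (A : ℝ≥0∞) (μ : Measure X) : Prop :=
  ∀ t : ℝ, 0 < t → μ {x | ENNReal.ofReal t < f x} ≤ A * ENNReal.ofReal (t ^ (-l))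

namespace WeakLpBound

variable {f : X → ℝ≥0∞} {l M : ℝ} {A : ℝ≥0∞}

theorem lintegral_min_rpow_le (h : WeakLpBound f l A μ) (hf : AEMeasurable f μ) {p : ℝ}
    (hp : 0 < p) (hlp : l < p) (hM : 0 < M) :
    ∫⁻ x, min (f x) (ENNReal.ofReal M) ^ p ∂μ ≤
      ENNReal.ofReal (p / (p - l)) * A * ENNReal.ofReal (M ^ (p - l)) := by
  have hpl : 0 < p - l := sub_pos.2 hlp
  have hdistr : ∀ t ∈ Ioi (0 : ℝ), μ {x | ENNReal.ofReal t < min (f x) (ENNReal.ofReal M)} *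
      ENNReal.ofReal (t ^ (p - 1)) ≤
        (Ioo 0 M).indicator (fun t => A * ENNReal.ofReal (t ^ (p - l - 1))) t := by
    intro t ht
    rcases lt_or_ge t M with htM | htM
    · rw [indicator_of_mem (show t ∈ Ioo 0 M from ⟨ht, htM⟩)]
      have hsub : {x | ENNReal.ofReal t < min (f x) (ENNReal.ofReal M)} ⊆
          {x | ENNReal.ofReal t < f x} := ofPred_subset_ofPred.2 fun x hx => (lt_min_iff.1 hx).1
      calc _ ≤ A * ENNReal.ofReal (t ^ (-l)) * ENNReal.ofReal (t ^ (p - 1)) :=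
            mul_le_mul_left ((measure_mono hsub).trans (h t ht)) _
        _ = A * ENNReal.ofReal (t ^ (p - l - 1)) := by
            rw [mul_assoc, ← ENNReal.ofReal_mul (Real.rpow_nonneg ht.le _), ← Real.rpow_add ht]
            ring_nf
    · simp [(ENNReal.ofReal_le_ofReal htM).not_gt]
  calc ∫⁻ x, min (f x) (ENNReal.ofReal M) ^ p ∂μ
      ≤ ENNReal.ofReal p * ∫⁻ t, (Ioo 0 M).indicator
          (fun t => A * ENNReal.ofReal (t ^ (p - l - 1))) t := by
        rw [lintegral_rpow_eq_lintegral_meas_ofReal_lt_mul (by fun_prop) hp]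
        gcongr ENNReal.ofReal p * ?_
        exact (setLIntegral_mono' measurableSet_Ioi hdistr).trans (setLIntegral_le_lintegral _ _)
    _ = ENNReal.ofReal p * (A * ENNReal.ofReal (M ^ (p - l) / (p - l))) := by
        rw [lintegral_indicator measurableSet_Ioo, lintegral_const_mul _ (by fun_prop),
          lintegral_Ioo_rpow_sub_one hpl hM.le]
    _ = _ := by
        rw [div_eq_mul_inv p, ENNReal.ofReal_mul hp.le, div_eq_inv_mul,
          ENNReal.ofReal_mul (by positivity)]
        ring

theorem lintegral_sub_le (h : WeakLpBound f l A μ) (hf : AEMeasurable f μ) (hl : 1 < l)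
    (hM : 0 < M) :
    ∫⁻ x, (f x - ENNReal.ofReal M) ∂μ ≤
      A * ENNReal.ofReal (1 / (l - 1)) * ENNReal.ofReal (M ^ (1 - l)) := by
  have hdistr : ∀ t ∈ Ioi (0 : ℝ), μ {x | ENNReal.ofReal t < f x - ENNReal.ofReal M} ≤
      A * ENNReal.ofReal ((t + M) ^ (-l)) := by
    intro t (ht : 0 < t)
    simp only [lt_tsub_iff_right, ← ENNReal.ofReal_add ht.le hM.le]
    exact h _ (by positivity)
  calc ∫⁻ x, (f x - ENNReal.ofReal M) ∂μ
      = ∫⁻ t in Ioi (0 : ℝ), μ {x | ENNReal.ofReal t < f x - ENNReal.ofReal M} := by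
        simpa using lintegral_rpow_eq_lintegral_meas_ofReal_lt_mul
          (hf.sub_const (ENNReal.ofReal M)) one_pos
    _ ≤ ∫⁻ t in Ioi (0 : ℝ), A * ENNReal.ofReal ((t + M) ^ (-l)) :=
        setLIntegral_mono' measurableSet_Ioi hdistr
    _ = A * ∫⁻ t in Ioi M, ENNReal.ofReal (t ^ (-l)) := by
        rw [lintegral_const_mul _ (by fun_prop),
          ← (measurePreserving_add_right volume M).setLIntegral_comp_preimage_emb
            (measurableEmbedding_addRight M) fun t => ENNReal.ofReal (t ^ (-l))]
        simp
    _ = A * ENNReal.ofReal (M ^ (-(l - 1)) / (l - 1)) := by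
        rw [← lintegral_Ioi_rpow_neg_sub_one (sub_pos.2 hl) hM]
        ring_nf
    _ = _ := by
        rw [mul_assoc, ← ENNReal.ofReal_mul (one_div_nonneg.2 (sub_pos.2 hl).le)]
        ring_nf

theorem lintegral_min_mul_le (h : WeakLpBound f l A μ) (hf : AEMeasurable f μ) {G : X → ℝ≥0∞}
    (hG : AEMeasurable G μ) {p r : ℝ} (hpr : p.HolderConjugate r) (hlp : l < p)
    (hGr : ∫⁻ x, G x ^ r ∂μ ≤ 1) (hM : 0 < M) :
    ∫⁻ x, min (f x) (ENNReal.ofReal M) * G x ∂μ ≤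
      (ENNReal.ofReal (p / (p - l)) * A) ^ (1 / p) * ENNReal.ofReal (M ^ (1 - l / p)) := by
  have hp := hpr.pos
  calc ∫⁻ x, min (f x) (ENNReal.ofReal M) * G x ∂μ
      ≤ (∫⁻ x, min (f x) (ENNReal.ofReal M) ^ p ∂μ) ^ (1 / p) * (∫⁻ x, G x ^ r ∂μ) ^ (1 / r) :=
        ENNReal.lintegral_mul_le_Lp_mul_Lq μ hpr (by fun_prop) hG
    _ ≤ (ENNReal.ofReal (p / (p - l)) * A * ENNReal.ofReal (M ^ (p - l))) ^ (1 / p) * 1 := by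
        gcongr
        · exact h.lintegral_min_rpow_le hf hp hlp hM
        · exact ENNReal.rpow_le_one hGr (one_div_nonneg.2 hpr.symm.nonneg)
    _ = _ := by
        rw [mul_one, ENNReal.mul_rpow_of_nonneg _ _ (by positivity),
          ENNReal.ofReal_rpow_of_nonneg (by positivity) (by positivity), ← Real.rpow_mul hM.le]
        congr 3
        field_simp

end WeakLpBound

end WeakLp

section StrongType

variable {X Y : Type*} [MeasurableSpace X] [MeasurableSpace Y] {μ : Measure X} {ν : Measure Y}

/-- The positive integral operator `G ↦ ∫⁻ y, K · y * G y ∂ν` with kernel `K` is of strong type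
`(p, q)`, i.e. bounded from `L^p(ν)` to `L^q(μ)`. Inputs and outputs may take the value `∞`, so no
integrability of `K x · * G` is presupposed. -/
def HasStrongType (K : X → Y → ℝ≥0∞) (p q : ℝ≥0∞) (ν : Measure Y) (μ : Measure X) : Prop :=
  ∃ C : ℝ≥0, ∀ G : Y → ℝ≥0∞, Measurable G →
    eLpNorm (fun x => ∫⁻ y, K x y * G y ∂ν) q μ ≤ C * eLpNorm G p ν

theorem eLpNorm_ofReal_eq_lintegral_rpow {p : ℝ} (hp : 0 < p) (f : X → ℝ≥0∞) :
    eLpNorm f (ENNReal.ofReal p) μ = (∫⁻ x, f x ^ p ∂μ) ^ (1 / p) := by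
  simp [eLpNorm_eq_lintegral_rpow_enorm_toReal, hp, hp.le]

theorem measurable_lintegral_kernel_mul [SFinite ν] {K : X → Y → ℝ≥0∞}
    (hK : Measurable (Function.uncurry K)) {G : Y → ℝ≥0∞} (hG : Measurable G) :
    Measurable fun x => ∫⁻ y, K x y * G y ∂ν :=
  (hK.mul (hG.comp measurable_snd)).lintegral_prod_right'

namespace HasStrongType

variable {K K₁ K₂ : X → Y → ℝ≥0∞} {p q : ℝ≥0∞}

theorem mono (h : HasStrongType K₂ p q ν μ) (hle : ∀ᵐ x ∂μ, ∀ᵐ y ∂ν, K₁ x y ≤ K₂ x y) :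
    HasStrongType K₁ p q ν μ := by
  obtain ⟨C, hC⟩ := h
  refine ⟨C, fun G hG => (eLpNorm_mono_enorm_ae ?_).trans (hC G hG)⟩
  filter_upwards [hle] with x hx
  simp only [enorm_eq_self]
  refine lintegral_mono_ae ?_
  filter_upwards [hx] with y hy
  gcongr

theorem const_mul (h : HasStrongType K p q ν μ) {c : ℝ≥0∞} (hc : c ≠ ∞) :
    HasStrongType (fun x y => c * K x y) p q ν μ := by
  lift c to ℝ≥0 using hc
  obtain ⟨C, hC⟩ := h
  refine ⟨c * C, fun G hG => ?_⟩
  calc eLpNorm (fun x => ∫⁻ y, c * K x y * G y ∂ν) q μ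
      ≤ c • eLpNorm (fun x => ∫⁻ y, K x y * G y ∂ν) q μ := by
        refine eLpNorm_le_nnreal_smul_eLpNorm_of_ae_le_mul' (ae_of_all _ fun x => ?_) q
        simp only [enorm_eq_self, mul_assoc, lintegral_const_mul' _ _ ENNReal.coe_ne_top, le_refl]
    _ ≤ c * (C * eLpNorm G p ν) := mul_le_mul_right (hC G hG) _
    _ = _ := by rw [← mul_assoc, ENNReal.coe_mul]

theorem add [SFinite ν] (h₁ : HasStrongType K₁ p q ν μ) (h₂ : HasStrongType K₂ p q ν μ)
    (hK₁ : Measurable (Function.uncurry K₁)) (hK₂ : Measurable (Function.uncurry K₂))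
    (hq : 1 ≤ q) : HasStrongType (fun x y => K₁ x y + K₂ x y) p q ν μ := by
  obtain ⟨C₁, hC₁⟩ := h₁
  obtain ⟨C₂, hC₂⟩ := h₂
  refine ⟨C₁ + C₂, fun G hG => ?_⟩
  have hsplit : (fun x => ∫⁻ y, (K₁ x y + K₂ x y) * G y ∂ν) =
      (fun x => ∫⁻ y, K₁ x y * G y ∂ν) + fun x => ∫⁻ y, K₂ x y * G y ∂ν := by
    funext x
    simp only [add_mul, Pi.add_apply]
    exact lintegral_add_left (hK₁.of_uncurry_left.mul hG) _
  calc eLpNorm (fun x => ∫⁻ y, (K₁ x y + K₂ x y) * G y ∂ν) q μ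
      ≤ eLpNorm (fun x => ∫⁻ y, K₁ x y * G y ∂ν) q μ +
          eLpNorm (fun x => ∫⁻ y, K₂ x y * G y ∂ν) q μ := by
        rw [hsplit]
        exact eLpNorm_add_le (measurable_lintegral_kernel_mul hK₁ hG).aestronglyMeasurable
          (measurable_lintegral_kernel_mul hK₂ hG).aestronglyMeasurable hq
    _ ≤ C₁ * eLpNorm G p ν + C₂ * eLpNorm G p ν := add_le_add (hC₁ G hG) (hC₂ G hG)
    _ = _ := by push_cast; ring

theorem of_eLpNorm_le_one {p q : ℝ≥0∞} (hp : p ≠ 0) {C : ℝ≥0}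
    (h : ∀ G : Y → ℝ≥0∞, Measurable G → eLpNorm G p ν ≤ 1 →
      eLpNorm (fun x => ∫⁻ y, K x y * G y ∂ν) q μ ≤ C) :
    HasStrongType K p q ν μ := by
  refine ⟨C + 1, fun G hG => ?_⟩
  generalize hN : eLpNorm G p ν = N
  rcases eq_or_ne N ∞ with rfl | hN_top
  · simp [ENNReal.mul_top]
  rcases eq_or_ne N 0 with rfl | hN0
  · have hG0 : G =ᵐ[ν] 0 := (eLpNorm_eq_zero_iff hG.aestronglyMeasurable hp).1 hN
    have hKG (x : X) : ∫⁻ y, K x y * G y ∂ν = 0 := by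
      rw [lintegral_congr_ae (g := 0) (by filter_upwards [hG0] with y hy; simp [hy])]
      simp
    simp [hKG]
  lift N to ℝ≥0 using hN_top
  have hN0' : N ≠ 0 := by simpa using hN0
  have hnormalized : eLpNorm (fun y => (N⁻¹ : ℝ≥0) * G y) p ν ≤ 1 := by
    calc _ ≤ N⁻¹ • eLpNorm G p ν :=
          eLpNorm_le_nnreal_smul_eLpNorm_of_ae_le_mul' (ae_of_all _ fun y => by simp) _
      _ = 1 := by rw [hN, ENNReal.smul_def, smul_eq_mul, ← ENNReal.coe_mul, inv_mul_cancel₀ hN0',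
          ENNReal.coe_one]
  have hscale (x : X) : ∫⁻ y, K x y * G y ∂ν = N * ∫⁻ y, K x y * ((N⁻¹ : ℝ≥0) * G y) ∂ν := by
    rw [← lintegral_const_mul' _ _ ENNReal.coe_ne_top]
    refine lintegral_congr fun y => ?_
    rw [mul_left_comm, ← mul_assoc (N : ℝ≥0∞), ← ENNReal.coe_mul, mul_inv_cancel₀ hN0',
      ENNReal.coe_one, one_mul]
  calc eLpNorm (fun x => ∫⁻ y, K x y * G y ∂ν) q μ
      ≤ N • eLpNorm (fun x => ∫⁻ y, K x y * ((N⁻¹ : ℝ≥0) * G y) ∂ν) q μ :=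
        eLpNorm_le_nnreal_smul_eLpNorm_of_ae_le_mul' (ae_of_all _ fun x => (hscale x).le) _
    _ ≤ N * C := mul_le_mul_right (h _ (by fun_prop) hnormalized) _
    _ ≤ (C + 1 : ℝ≥0) * N := by
        rw [mul_comm]
        gcongr
        exact le_self_add

theorem of_lintegral_rpow_le {r q : ℝ} (hr : 0 < r) (hq : 0 < q) {C : ℝ≥0∞} (hC : C ≠ ∞)
    (h : ∀ G : Y → ℝ≥0∞, Measurable G → ∫⁻ y, G y ^ r ∂ν ≤ 1 →
      ∫⁻ x, (∫⁻ y, K x y * G y ∂ν) ^ q ∂μ ≤ C) :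
    HasStrongType K (ENNReal.ofReal r) (ENNReal.ofReal q) ν μ := by
  lift C to ℝ≥0 using hC
  refine of_eLpNorm_le_one (by simpa using hr) (C := C ^ (1 / q)) fun G hG hG1 => ?_
  rw [eLpNorm_ofReal_eq_lintegral_rpow hr] at hG1
  rw [eLpNorm_ofReal_eq_lintegral_rpow hq, ENNReal.coe_rpow_of_nonneg _ (by positivity)]
  gcongr
  exact h G hG ((ENNReal.rpow_le_rpow_iff (one_div_pos.2 hr)).1 (hG1.trans_eq (by simp)))

end HasStrongType

theorem lintegral_mul_le_truncation_add {f G : Y → ℝ≥0∞} (hf : Measurable f) (hG : Measurable G)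
    (M s : ℝ≥0∞) :
    ∫⁻ y, f y * G y ∂ν ≤ ∫⁻ y, min (f y) M * G y ∂ν + (∫⁻ y, (f y - M) ∂ν) * s +
      ∫⁻ y, (f y - M) * {y | s < G y}.indicator G y ∂ν := by
  have hG_le (y : Y) : G y ≤ s + {y | s < G y}.indicator G y := by
    by_cases hy : s < G y
    · rw [indicator_of_mem (show y ∈ {y | s < G y} from hy)]
      exact le_add_self
    · exact (not_lt.1 hy).trans le_self_add
  calc ∫⁻ y, f y * G y ∂ν
      ≤ ∫⁻ y, (min (f y) M * G y + (f y - M) * s + (f y - M) * {y | s < G y}.indicator G y) ∂ν := by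
        refine lintegral_mono fun y => ?_
        calc f y * G y = min (f y) M * G y + (f y - M) * G y := by
              rw [← add_mul, add_comm, tsub_add_min]
          _ ≤ min (f y) M * G y + (f y - M) * (s + {y | s < G y}.indicator G y) := by
              gcongr
              exact hG_le y
          _ = _ := by ring
    _ = _ := by
        rw [lintegral_add_left (by fun_prop), lintegral_add_left (by fun_prop),
          lintegral_mul_const _ (by fun_prop)]

theorem lintegral_lintegral_mul_le [SFinite μ] [SFinite ν] {K : X → Y → ℝ≥0∞}
    (hK : Measurable (Function.uncurry K)) {G : Y → ℝ≥0∞} (hG : Measurable G) {b : ℝ≥0∞}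
    (hb : ∀ y, ∫⁻ x, K x y ∂μ ≤ b) :
    ∫⁻ x, ∫⁻ y, K x y * G y ∂ν ∂μ ≤ b * ∫⁻ y, G y ∂ν := by
  rw [lintegral_lintegral_swap (hK.mul (hG.comp measurable_snd)).aemeasurable,
    ← lintegral_const_mul _ hG]
  refine lintegral_mono fun y => ?_
  rw [lintegral_mul_const _ hK.of_uncurry_right]
  gcongr
  exact hb y

theorem meas_lt_lintegral_kernel_mul_le [SFinite μ] [SFinite ν] {K : X → Y → ℝ≥0∞}
    (hK : Measurable (Function.uncurry K)) {G : Y → ℝ≥0∞} (hG : Measurable G)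
    {M s a b τ : ℝ≥0∞} (hτ : τ ≠ 0) (hτ_top : τ ≠ ∞)
    (ha : ∀ x, ∫⁻ y, min (K x y) M * G y ∂ν ≤ a)
    (hb_left : ∀ x, ∫⁻ y, (K x y - M) ∂ν ≤ b) (hb_right : ∀ y, ∫⁻ x, (K x y - M) ∂μ ≤ b) :
    μ {x | a + b * s + τ < ∫⁻ y, K x y * G y ∂ν} ≤ b * (∫⁻ y in {y | s < G y}, G y ∂ν) / τ := by
  have hlevel : MeasurableSet {y | s < G y} := measurableSet_lt measurable_const hG
  set tail : X → ℝ≥0∞ := fun x => ∫⁻ y, (K x y - M) * {y | s < G y}.indicator G y ∂ν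
  have htail : Measurable tail :=
    measurable_lintegral_kernel_mul (hK.sub_const M) (hG.indicator hlevel)
  have hsub : {x | a + b * s + τ < ∫⁻ y, K x y * G y ∂ν} ⊆ {x | τ ≤ tail x} := by
    intro x hx
    by_contra! htail_lt
    refine lt_irrefl (a + b * s + τ) (hx.trans_le ?_)
    calc ∫⁻ y, K x y * G y ∂ν
        ≤ ∫⁻ y, min (K x y) M * G y ∂ν + (∫⁻ y, (K x y - M) ∂ν) * s + tail x :=
          lintegral_mul_le_truncation_add hK.of_uncurry_left hG M s
      _ ≤ a + b * s + τ := by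
          gcongr
          exacts [ha x, hb_left x, (not_le.1 htail_lt).le]
  calc _ ≤ μ {x | τ ≤ tail x} := measure_mono hsub
    _ ≤ (∫⁻ x, tail x ∂μ) / τ := meas_ge_le_lintegral_div htail.aemeasurable hτ hτ_top
    _ ≤ _ := by
        rw [← lintegral_indicator hlevel]
        gcongr
        exact lintegral_lintegral_mul_le (hK.sub_const M) (hG.indicator hlevel) hb_right

theorem lintegral_one_add_mul_rpow_eq_withDensity {G : Y → ℝ≥0∞} (hG : Measurable G) {s p : ℝ}
    (hs : 0 ≤ s) (hp : 0 < p) :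
    ∫⁻ y, G y ^ (1 + s * p) ∂ν = ENNReal.ofReal p * ∫⁻ t in Ioi (0 : ℝ),
      ν.withDensity G {y | ENNReal.ofReal t < G y ^ s} * ENNReal.ofReal (t ^ (p - 1)) := by
  rw [← lintegral_rpow_eq_lintegral_meas_ofReal_lt_mul (by fun_prop) hp,
    lintegral_withDensity_eq_lintegral_mul _ hG (by fun_prop)]
  refine lintegral_congr fun y => ?_
  rw [ENNReal.rpow_add_of_nonneg _ _ zero_le_one (by positivity), ENNReal.rpow_one,
    ENNReal.rpow_mul, Pi.mul_apply]

theorem lintegral_rpow_le_of_meas_lt_le {F : X → ℝ≥0∞} (hF : Measurable F) {G : Y → ℝ≥0∞}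
    (hG : Measurable G) {r q : ℝ} (hr : 1 < r) (hq : 0 < q) {B : ℝ≥0∞}
    (h : ∀ t : ℝ, 0 < t → μ {x | ENNReal.ofReal t < F x} ≤
      B * ENNReal.ofReal (t ^ (-(q / r))) *
        ∫⁻ y in {y | ENNReal.ofReal (t ^ (q / r)) < G y}, G y ∂ν) :
    ∫⁻ x, F x ^ q ∂μ ≤ B * ENNReal.ofReal (r / (r - 1)) * ∫⁻ y, G y ^ r ∂ν := by
  set ρ : Measure Y := ν.withDensity G
  set p := q - q / r with hp_def
  have hp : 0 < p := sub_pos.2 (div_lt_self hq hr)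
  have hconst : ENNReal.ofReal q = ENNReal.ofReal (r / (r - 1)) * ENNReal.ofReal p := by
    have hr1 : 0 < r - 1 := sub_pos.2 hr
    rw [← ENNReal.ofReal_mul (by positivity), hp_def]
    field_simp
  have hlayer : ∫⁻ y, G y ^ r ∂ν = ENNReal.ofReal p * ∫⁻ t in Ioi (0 : ℝ),
      ρ {y | ENNReal.ofReal t < G y ^ (r / q)} * ENNReal.ofReal (t ^ (p - 1)) := by
    have hrp : 1 + r / q * p = r := by rw [hp_def]; field_simp; ring
    rw [← lintegral_one_add_mul_rpow_eq_withDensity hG (by positivity) hp, hrp]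
  have hmeas : Measurable fun t : ℝ =>
      ρ {y | ENNReal.ofReal t < G y ^ (r / q)} * ENNReal.ofReal (t ^ (p - 1)) :=
    (measurable_meas_ofReal_lt _).mul (by fun_prop)
  have hdistr : ∀ t ∈ Ioi (0 : ℝ), μ {x | ENNReal.ofReal t < F x} *
      ENNReal.ofReal (t ^ (q - 1)) ≤
        B * (ρ {y | ENNReal.ofReal t < G y ^ (r / q)} * ENNReal.ofReal (t ^ (p - 1))) := by
    intro t (ht : 0 < t)
    have hlevel : {y | ENNReal.ofReal t < G y ^ (r / q)} =
        {y | ENNReal.ofReal (t ^ (q / r)) < G y} := by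
      ext y
      rw [mem_ofPred_eq, mem_ofPred_eq, ← ENNReal.ofReal_rpow_of_pos ht, ← inv_div r q,
        ENNReal.rpow_inv_lt_iff (by positivity)]
    rw [hlevel, withDensity_apply _ (measurableSet_lt measurable_const hG)]
    calc _ ≤ _ := mul_le_mul_left (h t ht) _
      _ = _ := by
        rw [show p - 1 = -(q / r) + (q - 1) by rw [hp_def]; ring, Real.rpow_add ht,
          ENNReal.ofReal_mul (by positivity)]
        ring
  calc ∫⁻ x, F x ^ q ∂μ
      ≤ ENNReal.ofReal q * ∫⁻ t in Ioi (0 : ℝ),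
          B * (ρ {y | ENNReal.ofReal t < G y ^ (r / q)} * ENNReal.ofReal (t ^ (p - 1))) := by
        rw [lintegral_rpow_eq_lintegral_meas_ofReal_lt_mul (by fun_prop) hq]
        gcongr ENNReal.ofReal q * ?_
        exact setLIntegral_mono' measurableSet_Ioi hdistr
    _ = _ := by
        rw [lintegral_const_mul _ hmeas, hlayer, hconst]
        ring

theorem lintegral_rpow_le_of_meas_mul_lt_le {F : X → ℝ≥0∞} (hF : Measurable F) {G : Y → ℝ≥0∞}
    (hG : Measurable G) {r q : ℝ} (hr : 1 < r) (hq : 0 < q) {A B : ℝ≥0∞} (hA : A ≠ 0)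
    (hA_top : A ≠ ∞)
    (h : ∀ t : ℝ, 0 < t → μ {x | A * ENNReal.ofReal t < F x} ≤
      B * ENNReal.ofReal (t ^ (-(q / r))) *
        ∫⁻ y in {y | ENNReal.ofReal (t ^ (q / r)) < G y}, G y ∂ν) :
    ∫⁻ x, F x ^ q ∂μ ≤ A ^ q * (B * ENNReal.ofReal (r / (r - 1)) * ∫⁻ y, G y ^ r ∂ν) := by
  calc ∫⁻ x, F x ^ q ∂μ = A ^ q * ∫⁻ x, (F x / A) ^ q ∂μ := by
        rw [← lintegral_const_mul _ (by fun_prop)]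
        simp only [← ENNReal.mul_rpow_of_nonneg _ _ hq.le, ENNReal.mul_div_cancel hA hA_top]
    _ ≤ _ := by
        gcongr
        refine lintegral_rpow_le_of_meas_lt_le (by fun_prop) hG hr hq fun t ht => ?_
        simp only [ENNReal.lt_div_iff_mul_lt (Or.inl hA) (Or.inl hA_top), mul_comm _ A]
        exact h t ht

theorem rpow_div_rpow_one_sub {p r q l t : ℝ} (hpr : p.HolderConjugate r) (hl : l ≠ 0)
    (hq : q ≠ 0) (hlpq : l / p + l / q = 1) (ht : 0 < t) :
    (t ^ (q / l)) ^ (1 - l) = t ^ (-(q / r)) * t := by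
  have hr_inv : r⁻¹ = 1 - p⁻¹ := by linarith [hpr.inv_add_inv_eq_one]
  have hq_l : q / l = q / p + 1 := by
    have hp := hpr.ne_zero
    field_simp at hlpq ⊢
    linarith
  have hexp : q / l * (1 - l) = -(q / r) + 1 := by
    rw [mul_one_sub, div_mul_cancel₀ _ hl, hq_l, div_eq_mul_inv q r, hr_inv]
    ring
  rw [← Real.rpow_mul ht.le, hexp, Real.rpow_add_one ht.ne']

theorem meas_lt_lintegral_kernel_mul_le_of_weakLpBound [SFinite μ] [SFinite ν]
    {K : X → Y → ℝ≥0∞} (hK : Measurable (Function.uncurry K)) {p r q l : ℝ} {A : ℝ≥0∞}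
    (hpr : p.HolderConjugate r) (hq : 0 < q) (hl : 1 < l) (hlpq : l / p + l / q = 1)
    (hK_left : ∀ x, WeakLpBound (K x) l A ν) (hK_right : ∀ y, WeakLpBound (fun x => K x y) l A μ)
    {G : Y → ℝ≥0∞} (hG : Measurable G) (hG1 : ∫⁻ y, G y ^ r ∂ν ≤ 1) {t : ℝ} (ht : 0 < t) :
    μ {x | ((ENNReal.ofReal (p / (p - l)) * A) ^ (1 / p) + A * ENNReal.ofReal (1 / (l - 1)) + 1) *
        ENNReal.ofReal t < ∫⁻ y, K x y * G y ∂ν} ≤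
      A * ENNReal.ofReal (1 / (l - 1)) * ENNReal.ofReal (t ^ (-(q / r))) *
        ∫⁻ y in {y | ENNReal.ofReal (t ^ (q / r)) < G y}, G y ∂ν := by
  set a := (ENNReal.ofReal (p / (p - l)) * A) ^ (1 / p)
  set b := A * ENNReal.ofReal (1 / (l - 1))
  set T := ENNReal.ofReal t
  have hT : T ≠ 0 := by simpa [T] using ht
  have hT_top : T ≠ ∞ := ENNReal.ofReal_ne_top
  have hlp : l < p := (div_lt_one hpr.pos).1 (by linarith [show 0 < l / q by positivity])
  -- Truncating at this height balances the bounded and the integrable part of the kernel.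
  set M := t ^ (q / l)
  have hM : 0 < M := by positivity
  have hM_low : M ^ (1 - l / p) = t := by
    rw [← hlpq, add_sub_cancel_left, ← Real.rpow_mul ht.le, div_mul_div_cancel₀ (by positivity),
      div_self hq.ne', Real.rpow_one]
  have hM_high : ENNReal.ofReal (M ^ (1 - l)) = ENNReal.ofReal (t ^ (-(q / r))) * T := by
    rw [rpow_div_rpow_one_sub hpr (by linarith) hq.ne' hlpq ht, ENNReal.ofReal_mul (by positivity)]
  have hlow (x : X) := (hK_left x).lintegral_min_mul_le hK.of_uncurry_left.aemeasurable
    hG.aemeasurable hpr hlp hG1 hM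
  have hhigh_left (x : X) := (hK_left x).lintegral_sub_le hK.of_uncurry_left.aemeasurable hl hM
  have hhigh_right (y : Y) := (hK_right y).lintegral_sub_le hK.of_uncurry_right.aemeasurable hl hM
  rw [hM_low] at hlow
  rw [hM_high] at hhigh_left hhigh_right
  have hlevel : b * (ENNReal.ofReal (t ^ (-(q / r))) * T) * ENNReal.ofReal (t ^ (q / r)) =
      b * T := by
    have hcancel : ENNReal.ofReal (t ^ (-(q / r))) * ENNReal.ofReal (t ^ (q / r)) = 1 := by
      rw [← ENNReal.ofReal_mul (by positivity), ← Real.rpow_add ht, neg_add_cancel, Real.rpow_zero,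
        ENNReal.ofReal_one]
    rw [← mul_assoc, mul_right_comm _ T, mul_assoc b, hcancel, mul_one]
  calc _ = μ {x | a * T + b * (ENNReal.ofReal (t ^ (-(q / r))) * T) * ENNReal.ofReal (t ^ (q / r)) +
            T < ∫⁻ y, K x y * G y ∂ν} := by rw [hlevel, add_mul, add_mul, one_mul]
    _ ≤ b * (ENNReal.ofReal (t ^ (-(q / r))) * T) *
          (∫⁻ y in {y | ENNReal.ofReal (t ^ (q / r)) < G y}, G y ∂ν) / T :=
        meas_lt_lintegral_kernel_mul_le hK hG hT hT_top hlow hhigh_left hhigh_right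
    _ = _ := by
        rw [← mul_assoc, mul_right_comm _ T, ENNReal.mul_div_cancel_right hT hT_top]

theorem hasStrongType_of_weakLpBound [SFinite μ] [SFinite ν]
    {K : X → Y → ℝ≥0∞} (hK : Measurable (Function.uncurry K)) {r q l : ℝ} {A : ℝ≥0∞} (hA : A ≠ ∞)
    (hr : 1 < r) (hrq : r < q) (hl : 1 / l = 1 - (1 / r - 1 / q))
    (hK_left : ∀ x, WeakLpBound (K x) l A ν)
    (hK_right : ∀ y, WeakLpBound (fun x => K x y) l A μ) :
    HasStrongType K (ENNReal.ofReal r) (ENNReal.ofReal q) ν μ := by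
  have hq : 0 < q := by linarith
  have hr0 : 0 < r := by linarith
  have hl0 : 0 < l := one_div_pos.1 (by linarith [(div_lt_one hr0).2 hr, one_div_pos.2 hq])
  have hl1 : 1 < l := (div_lt_one hl0).1 (by linarith [one_div_lt_one_div_of_lt hr0 hrq])
  obtain ⟨p, hpr⟩ : ∃ p : ℝ, p.HolderConjugate r :=
    ⟨_, (Real.HolderConjugate.conjExponent hr).symm⟩
  have hlpq : l / p + l / q = 1 := by
    have hl_inv : 1 / l = p⁻¹ + q⁻¹ := by
      linarith [hpr.inv_add_inv_eq_one, one_div q, one_div r]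
    rw [div_eq_mul_inv, div_eq_mul_inv, ← mul_add, ← hl_inv, mul_one_div_cancel hl0.ne']
  set a := (ENNReal.ofReal (p / (p - l)) * A) ^ (1 / p)
  set b := A * ENNReal.ofReal (1 / (l - 1))
  have ha : a ≠ ∞ := ENNReal.rpow_ne_top_of_nonneg (one_div_nonneg.2 hpr.nonneg) (by finiteness)
  have hb : b ≠ ∞ := by finiteness
  refine .of_lintegral_rpow_le hr0 hq
    (C := (a + b + 1) ^ q * (b * ENNReal.ofReal (r / (r - 1)))) (by finiteness) fun G hG hG1 => ?_
  calc _ ≤ (a + b + 1) ^ q * (b * ENNReal.ofReal (r / (r - 1)) * ∫⁻ y, G y ^ r ∂ν) :=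
        lintegral_rpow_le_of_meas_mul_lt_le (measurable_lintegral_kernel_mul hK hG) hG hr hq
          (by simp) (by finiteness) fun t ht =>
            meas_lt_lintegral_kernel_mul_le_of_weakLpBound hK hpr hq hl1 hlpq hK_left hK_right
              hG hG1 ht
    _ ≤ _ := mul_le_mul_right (mul_le_of_le_one_right' hG1) _

end StrongType

/-- The kernel `(u - ξ)^(-δ) ξ^(-β) u^(-α)` on `0 < ξ < u`, extended by zero. -/
noncomputable def powerKernel (α β δ u : ℝ) : ℝ → ℝ≥0∞ :=
  (Ioo 0 u).indicator fun ξ => ENNReal.ofReal ((u - ξ) ^ (-δ) * ξ ^ (-β) * u ^ (-α))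

section PowerKernel

variable {α β δ : ℝ}

theorem measurable_uncurry_powerKernel : Measurable (Function.uncurry (powerKernel α β δ)) := by
  have hregion : MeasurableSet {z : ℝ × ℝ | z.2 ∈ Ioo 0 z.1} :=
    (measurableSet_lt measurable_const measurable_snd).inter
      (measurableSet_lt measurable_snd measurable_fst)
  have hformula : Measurable fun z : ℝ × ℝ =>
      ENNReal.ofReal ((z.1 - z.2) ^ (-δ) * z.2 ^ (-β) * z.1 ^ (-α)) := by fun_prop
  exact hformula.indicator hregion

theorem lintegral_powerKernel_mul (u : ℝ) (G : ℝ → ℝ≥0∞) :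
    ∫⁻ ξ in Ioi 0, powerKernel α β δ u ξ * G ξ =
      ∫⁻ ξ in Ioo 0 u, ENNReal.ofReal ((u - ξ) ^ (-δ) * ξ ^ (-β) * u ^ (-α)) * G ξ := by
  simp only [powerKernel, ← indicator_mul_left]
  rw [setLIntegral_indicator measurableSet_Ioo, inter_eq_left.2 Ioo_subset_Ioi_self]

section HardyLittlewoodSobolev

theorem sub_mem_Ioo_of_lt_powerKernel {lam : ℝ} (hlam : 0 < lam) {t : ℝ} (ht : 0 < t) {u ξ : ℝ}
    (h : ENNReal.ofReal t < powerKernel 0 0 lam u ξ) :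
    u - ξ ∈ Ioo 0 (t ^ (-(1 / lam))) := by
  have hξ : ξ ∈ Ioo 0 u := mem_of_indicator_ne_zero (pos_of_gt h).ne'
  have hd : 0 < u - ξ := sub_pos.2 hξ.2
  refine ⟨hd, ?_⟩
  rw [powerKernel, indicator_of_mem hξ, neg_zero, Real.rpow_zero, Real.rpow_zero, mul_one, mul_one,
    ENNReal.ofReal_lt_ofReal_iff (by positivity)] at h
  rwa [one_div, ← inv_neg, Real.lt_rpow_inv_iff_of_neg hd ht (neg_lt_zero.2 hlam)]

theorem weakLpBound_powerKernel_left {lam : ℝ} (hlam : 0 < lam) (u : ℝ) :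
    WeakLpBound (powerKernel 0 0 lam u) (1 / lam) 1 (volume.restrict (Ioi 0)) := by
  intro t ht
  calc _ ≤ volume (Ioo (u - t ^ (-(1 / lam))) u) := by
        refine (Measure.restrict_apply_le _ _).trans (measure_mono fun ξ hξ => ?_)
        obtain ⟨hpos, hlt⟩ := sub_mem_Ioo_of_lt_powerKernel hlam ht hξ
        constructor <;> linarith
    _ = _ := by simp

theorem weakLpBound_powerKernel_right {lam : ℝ} (hlam : 0 < lam) (ξ : ℝ) :
    WeakLpBound (fun u => powerKernel 0 0 lam u ξ) (1 / lam) 1 (volume.restrict (Ioi 0)) := by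
  intro t ht
  calc _ ≤ volume (Ioo ξ (ξ + t ^ (-(1 / lam)))) := by
        refine (Measure.restrict_apply_le _ _).trans (measure_mono fun u hu => ?_)
        obtain ⟨hpos, hlt⟩ := sub_mem_Ioo_of_lt_powerKernel hlam ht hu
        constructor <;> linarith
    _ = _ := by simp

theorem hasStrongType_powerKernel_zero_zero {r q lam : ℝ} (hr : 1 < r) (hrq : r < q)
    (hlam : lam = 1 - (1 / r - 1 / q)) :
    HasStrongType (powerKernel 0 0 lam) (ENNReal.ofReal r) (ENNReal.ofReal q)
      (volume.restrict (Ioi 0)) (volume.restrict (Ioi 0)) := by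
  have hlam_pos : 0 < lam := by
    have hr_inv : 1 / r < 1 := (div_lt_one (by linarith)).2 hr
    have hq_inv : 0 < 1 / q := one_div_pos.2 (by linarith)
    linarith
  exact hasStrongType_of_weakLpBound measurable_uncurry_powerKernel ENNReal.one_ne_top hr hrq
    (by rw [one_div_one_div, hlam]) (weakLpBound_powerKernel_left hlam_pos)
    (weakLpBound_powerKernel_right hlam_pos)

end HardyLittlewoodSobolev

section Hardy

theorem lintegral_powerKernel_zero_mul (u : ℝ) (G : ℝ → ℝ≥0∞) :
    ∫⁻ ξ in Ioi 0, powerKernel α β 0 u ξ * G ξ =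
      ENNReal.ofReal (u ^ (-α)) * ∫⁻ ξ in Ioo 0 u, ENNReal.ofReal (ξ ^ (-β)) * G ξ := by
  rw [lintegral_powerKernel_mul, ← lintegral_const_mul' _ _ ENNReal.ofReal_ne_top]
  refine setLIntegral_congr_fun measurableSet_Ioo fun ξ hξ => ?_
  rw [neg_zero, Real.rpow_zero, one_mul, ENNReal.ofReal_mul (Real.rpow_nonneg hξ.1.le _),
    ← mul_assoc, mul_comm (ENNReal.ofReal (ξ ^ _))]

theorem lintegral_powerKernel_left_le {s : ℝ} (hs : 0 < s) (ξ : ℝ) :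
    ∫⁻ u in Ioi 0, powerKernel (s + 1) (-s) 0 u ξ ≤ ENNReal.ofReal (1 / s) := by
  rcases le_or_gt ξ 0 with hξ | hξ
  · have hzero (u : ℝ) : powerKernel (s + 1) (-s) 0 u ξ = 0 :=
      indicator_of_notMem (fun h => hξ.not_gt h.1) _
    simp [hzero]
  have hkernel (u : ℝ) : powerKernel (s + 1) (-s) 0 u ξ =
      (Ioi ξ).indicator (fun u => ENNReal.ofReal (ξ ^ s) * ENNReal.ofReal (u ^ (-s - 1))) u := by
    by_cases hu : ξ < u
    · rw [powerKernel, indicator_of_mem (show ξ ∈ Ioo 0 u from ⟨hξ, hu⟩),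
        indicator_of_mem (mem_Ioi.2 hu), ← ENNReal.ofReal_mul (by positivity), neg_zero,
        Real.rpow_zero, one_mul, neg_neg, neg_add']
    · rw [powerKernel, indicator_of_notMem (fun h => hu h.2),
        indicator_of_notMem (by simpa using hu)]
  calc ∫⁻ u in Ioi 0, powerKernel (s + 1) (-s) 0 u ξ
      ≤ ENNReal.ofReal (ξ ^ s) * ∫⁻ u in Ioi ξ, ENNReal.ofReal (u ^ (-s - 1)) := by
        simp only [hkernel]
        refine (setLIntegral_le_lintegral _ _).trans ?_
        rw [lintegral_indicator measurableSet_Ioi, lintegral_const_mul _ (by fun_prop)]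
    _ = ENNReal.ofReal (1 / s) := by
        rw [lintegral_Ioi_rpow_neg_sub_one hs hξ, ← ENNReal.ofReal_mul (by positivity),
          ← mul_div_assoc, ← Real.rpow_add hξ, add_neg_cancel, Real.rpow_zero]

theorem lintegral_Ioo_rpow_mul_le {p r : ℝ} (hpr : p.HolderConjugate r) {ε u : ℝ} (hu : 0 ≤ u)
    (hε : ε + β < 1 / p) {G : ℝ → ℝ≥0∞} (hG : Measurable G) :
    ∫⁻ ξ in Ioo 0 u, ENNReal.ofReal (ξ ^ (-β)) * G ξ ≤
      ENNReal.ofReal ((1 - (ε + β) * p) ^ (-(1 / p)) * u ^ (1 / p - (ε + β))) *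
        (∫⁻ ξ in Ioo 0 u, ENNReal.ofReal (ξ ^ (ε * r)) * G ξ ^ r) ^ (1 / r) := by
  have hp := hpr.pos
  have hr := hpr.symm.pos
  set m := 1 - (ε + β) * p
  have hm : 0 < m := sub_pos.2 ((lt_div_iff₀ hp).1 hε)
  have hweight : ∫⁻ ξ in Ioo 0 u, ENNReal.ofReal (ξ ^ (-(ε + β))) ^ p =
      ENNReal.ofReal (u ^ m / m) := by
    rw [← lintegral_Ioo_rpow_sub_one hm hu]
    refine setLIntegral_congr_fun measurableSet_Ioo fun ξ hξ => ?_
    rw [ENNReal.ofReal_rpow_of_nonneg (Real.rpow_nonneg hξ.1.le _) hp.le, ← Real.rpow_mul hξ.1.le]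
    congr 2
    ring
  calc ∫⁻ ξ in Ioo 0 u, ENNReal.ofReal (ξ ^ (-β)) * G ξ
      = ∫⁻ ξ in Ioo 0 u, ENNReal.ofReal (ξ ^ (-(ε + β))) * (ENNReal.ofReal (ξ ^ ε) * G ξ) := by
        refine setLIntegral_congr_fun measurableSet_Ioo fun ξ hξ => ?_
        rw [← mul_assoc, ← ENNReal.ofReal_mul (Real.rpow_nonneg hξ.1.le _), ← Real.rpow_add hξ.1]
        ring_nf
    _ ≤ (∫⁻ ξ in Ioo 0 u, ENNReal.ofReal (ξ ^ (-(ε + β))) ^ p) ^ (1 / p) *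
          (∫⁻ ξ in Ioo 0 u, (ENNReal.ofReal (ξ ^ ε) * G ξ) ^ r) ^ (1 / r) :=
        ENNReal.lintegral_mul_le_Lp_mul_Lq _ hpr (by fun_prop) (by fun_prop)
    _ = _ := by
        rw [hweight, ENNReal.ofReal_rpow_of_nonneg (by positivity) (by positivity)]
        congr 2
        · rw [div_eq_inv_mul, Real.mul_rpow (by positivity) (by positivity), ← Real.rpow_mul hu,
            Real.rpow_neg hm.le, Real.inv_rpow hm.le]
          congr 2
          simp only [m]
          field_simp
        · refine setLIntegral_congr_fun measurableSet_Ioo fun ξ hξ => ?_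
          rw [ENNReal.mul_rpow_of_nonneg _ _ hr.le,
            ENNReal.ofReal_rpow_of_nonneg (Real.rpow_nonneg hξ.1.le _) hr.le,
            ← Real.rpow_mul hξ.1.le]

theorem lintegral_Ioo_rpow_mul_le_of_le_one {s : ℝ} (hs : 0 ≤ s) (u : ℝ) {h : ℝ → ℝ≥0∞}
    (hh : ∫⁻ ξ in Ioi 0, h ξ ≤ 1) :
    ∫⁻ ξ in Ioo 0 u, ENNReal.ofReal (ξ ^ s) * h ξ ≤ ENNReal.ofReal (u ^ s) :=
  calc ∫⁻ ξ in Ioo 0 u, ENNReal.ofReal (ξ ^ s) * h ξ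
      ≤ ∫⁻ ξ in Ioo 0 u, ENNReal.ofReal (u ^ s) * h ξ := by
        refine setLIntegral_mono' measurableSet_Ioo fun ξ hξ => ?_
        gcongr
        exacts [hξ.1.le, hξ.2.le]
    _ = ENNReal.ofReal (u ^ s) * ∫⁻ ξ in Ioo 0 u, h ξ :=
        lintegral_const_mul' _ _ ENNReal.ofReal_ne_top
    _ ≤ ENNReal.ofReal (u ^ s) :=
        mul_le_of_le_one_right' ((lintegral_mono_set Ioo_subset_Ioi_self).trans hh)

theorem rpow_le_rpow_sub_one_mul {x y : ℝ≥0∞} (hxy : x ≤ y) {a : ℝ} (ha : 1 ≤ a) :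
    x ^ a ≤ y ^ (a - 1) * x := by
  have ha1 : 0 ≤ a - 1 := sub_nonneg.2 ha
  calc x ^ a = x ^ (a - 1) * x := by
        rw [← sub_add_cancel a 1, ENNReal.rpow_add_of_nonneg _ _ ha1 zero_le_one,
          ENNReal.rpow_one, sub_add_cancel]
    _ ≤ y ^ (a - 1) * x := by gcongr

theorem lintegral_powerKernel_mul_rpow_le {p r q ε u : ℝ} (hpr : p.HolderConjugate r)
    (hrq : r ≤ q) (hsum : α + β = 1 / p + 1 / q) (hε : 0 < ε) (hεβ : ε + β < 1 / p) (hu : 0 < u)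
    {G : ℝ → ℝ≥0∞} (hG : Measurable G) (hG1 : ∫⁻ ξ in Ioi 0, G ξ ^ r ≤ 1) :
    (∫⁻ ξ in Ioi 0, powerKernel α β 0 u ξ * G ξ) ^ q ≤
      ENNReal.ofReal ((1 - (ε + β) * p) ^ (-(1 / p))) ^ q *
        ∫⁻ ξ in Ioi 0, powerKernel (ε * r + 1) (-(ε * r)) 0 u ξ * G ξ ^ r := by
  have hr := hpr.symm.pos
  have hq : 0 < q := hr.trans_le hrq
  have hm : 0 < 1 - (ε + β) * p := sub_pos.2 ((lt_div_iff₀ hpr.pos).1 hεβ)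
  set c := (1 - (ε + β) * p) ^ (-(1 / p))
  set J := ∫⁻ ξ in Ioo 0 u, ENNReal.ofReal (ξ ^ (ε * r)) * G ξ ^ r
  have hJ_le : J ≤ ENNReal.ofReal (u ^ (ε * r)) :=
    lintegral_Ioo_rpow_mul_le_of_le_one (by positivity) u hG1
  have hJ_rpow : J ^ (1 / r * q) ≤ ENNReal.ofReal (u ^ (ε * (q - r))) * J := by
    have hqr : 0 ≤ 1 / r * q - 1 := by rw [one_div_mul_eq_div, sub_nonneg, one_le_div hr]; exact hrq
    have hexp : ε * r * (1 / r * q - 1) = ε * (q - r) := by field_simp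
    refine (rpow_le_rpow_sub_one_mul hJ_le (sub_nonneg.1 hqr)).trans_eq ?_
    rw [ENNReal.ofReal_rpow_of_nonneg (by positivity) hqr, ← Real.rpow_mul hu.le, hexp]
  calc (∫⁻ ξ in Ioi 0, powerKernel α β 0 u ξ * G ξ) ^ q
      ≤ (ENNReal.ofReal (u ^ (-α)) *
          (ENNReal.ofReal (c * u ^ (1 / p - (ε + β))) * J ^ (1 / r))) ^ q := by
        rw [lintegral_powerKernel_zero_mul]
        gcongr
        exact lintegral_Ioo_rpow_mul_le hpr hu.le hεβ hG
    _ = ENNReal.ofReal c ^ q * ENNReal.ofReal (u ^ (-1 - ε * q)) * J ^ (1 / r * q) := by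
        rw [ENNReal.ofReal_mul (by positivity), ← mul_assoc, mul_left_comm,
          ← ENNReal.ofReal_mul (by positivity), ← Real.rpow_add hu,
          show -α + (1 / p - (ε + β)) = -(1 / q) - ε by linarith,
          ENNReal.mul_rpow_of_nonneg _ _ hq.le, ENNReal.mul_rpow_of_nonneg _ _ hq.le,
          ENNReal.ofReal_rpow_of_nonneg (by positivity) hq.le (p := q) (x := u ^ _),
          ← Real.rpow_mul hu.le, ← ENNReal.rpow_mul]
        congr 4
        field_simp
    _ ≤ ENNReal.ofReal c ^ q * ENNReal.ofReal (u ^ (-1 - ε * q)) *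
          (ENNReal.ofReal (u ^ (ε * (q - r))) * J) := by gcongr
    _ = ENNReal.ofReal c ^ q * (ENNReal.ofReal (u ^ (-(ε * r + 1))) * J) := by
        rw [mul_assoc, ← mul_assoc (ENNReal.ofReal _) (ENNReal.ofReal _),
          ← ENNReal.ofReal_mul (by positivity), ← Real.rpow_add hu]
        ring_nf
    _ = _ := by rw [lintegral_powerKernel_zero_mul, neg_neg]

theorem hasStrongType_powerKernel_zero {r q : ℝ} (hr : 1 < r) (hrq : r ≤ q)
    (hsum : α + β = 1 - (1 / r - 1 / q)) (hα : 1 / q < α) :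
    HasStrongType (powerKernel α β 0) (ENNReal.ofReal r) (ENNReal.ofReal q)
      (volume.restrict (Ioi 0)) (volume.restrict (Ioi 0)) := by
  obtain ⟨p, hpr⟩ : ∃ p : ℝ, p.HolderConjugate r :=
    ⟨_, (Real.HolderConjugate.conjExponent hr).symm⟩
  have hp_inv : 1 / p = 1 - 1 / r := by linarith [hpr.inv_add_inv_eq_one, one_div p, one_div r]
  obtain ⟨ε, hε, hεβ⟩ : ∃ ε > 0, ε < 1 / p - β := exists_between (by linarith)
  have hr0 : 0 < r := by linarith
  have hq : 0 < q := by linarith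
  have hεr : 0 < ε * r := by positivity
  set c := ENNReal.ofReal ((1 - (ε + β) * p) ^ (-(1 / p)))
  refine .of_lintegral_rpow_le hr0 hq
    (C := c ^ q * ENNReal.ofReal (1 / (ε * r))) (by finiteness) fun G hG hG1 => ?_
  calc ∫⁻ u in Ioi 0, (∫⁻ ξ in Ioi 0, powerKernel α β 0 u ξ * G ξ) ^ q
      ≤ ∫⁻ u in Ioi 0, c ^ q *
          ∫⁻ ξ in Ioi 0, powerKernel (ε * r + 1) (-(ε * r)) 0 u ξ * G ξ ^ r :=
        setLIntegral_mono' measurableSet_Ioi fun u hu =>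
          lintegral_powerKernel_mul_rpow_le hpr hrq (by linarith) hε (by linarith) hu hG hG1
    _ ≤ c ^ q * (ENNReal.ofReal (1 / (ε * r)) * ∫⁻ ξ in Ioi 0, G ξ ^ r) := by
        rw [lintegral_const_mul' _ _ (by finiteness)]
        gcongr
        exact lintegral_lintegral_mul_le measurable_uncurry_powerKernel (by fun_prop)
          (lintegral_powerKernel_left_le hεr)
    _ ≤ _ := by
        gcongr
        exact mul_le_of_le_one_right' hG1

end Hardy

section Comparison

theorem rpow_neg_le_two_rpow_abs_mul {x y : ℝ} (hx : 0 < x) (hxy : x ≤ y) (hyx : y ≤ 2 * x)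
    (p : ℝ) : x ^ (-p) ≤ 2 ^ |p| * y ^ (-p) := by
  have hy : 0 < y := hx.trans_le hxy
  calc x ^ (-p) = (y / x) ^ p * y ^ (-p) := by
        rw [Real.div_rpow hy.le hx.le, Real.rpow_neg hx.le, Real.rpow_neg hy.le]
        field_simp
    _ ≤ 2 ^ |p| * y ^ (-p) := by
        gcongr
        calc (y / x) ^ p ≤ (y / x) ^ |p| :=
              Real.rpow_le_rpow_of_exponent_le ((one_le_div hx).2 hxy) (le_abs_self p)
          _ ≤ 2 ^ |p| :=
              Real.rpow_le_rpow (by positivity) ((div_le_iff₀ hx).2 hyx) (abs_nonneg p)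

theorem rpow_mul_rpow_mul_rpow_le_of_le_two_mul (hαβ : 0 ≤ α + β) {u ξ : ℝ} (hξu : ξ < u)
    (hu : u ≤ 2 * ξ) :
    (u - ξ) ^ (-δ) * ξ ^ (-β) * u ^ (-α) ≤ 2 ^ |β| * (u - ξ) ^ (-(α + β + δ)) := by
  have hξ : 0 < ξ := by linarith
  have hu0 : 0 < u := hξ.trans hξu
  have hd : 0 < u - ξ := sub_pos.2 hξu
  calc (u - ξ) ^ (-δ) * ξ ^ (-β) * u ^ (-α)
      ≤ (u - ξ) ^ (-δ) * (2 ^ |β| * u ^ (-β)) * u ^ (-α) := by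
        gcongr
        exact rpow_neg_le_two_rpow_abs_mul hξ hξu.le hu β
    _ = 2 ^ |β| * ((u - ξ) ^ (-δ) * u ^ (-(α + β))) := by
        rw [neg_add_rev, Real.rpow_add hu0]
        ring
    _ ≤ 2 ^ |β| * ((u - ξ) ^ (-δ) * (u - ξ) ^ (-(α + β))) := by
        gcongr ?_ * (?_ * ?_)
        exact Real.rpow_le_rpow_of_nonpos hd (by linarith) (by linarith)
    _ = 2 ^ |β| * (u - ξ) ^ (-(α + β + δ)) := by
        rw [← Real.rpow_add hd]
        ring_nf

theorem rpow_mul_rpow_mul_rpow_le_of_two_mul_le {u ξ : ℝ} (hξ : 0 < ξ) (hu : 2 * ξ ≤ u) :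
    (u - ξ) ^ (-δ) * ξ ^ (-β) * u ^ (-α) ≤ 2 ^ |δ| * (ξ ^ (-β) * u ^ (-(α + δ))) := by
  have hu0 : 0 < u := by linarith
  calc (u - ξ) ^ (-δ) * ξ ^ (-β) * u ^ (-α)
      ≤ 2 ^ |δ| * u ^ (-δ) * ξ ^ (-β) * u ^ (-α) := by
        gcongr
        exact rpow_neg_le_two_rpow_abs_mul (by linarith) (by linarith) (by linarith) δ
    _ = 2 ^ |δ| * (ξ ^ (-β) * u ^ (-(α + δ))) := by
        rw [neg_add, Real.rpow_add hu0]
        ring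

theorem powerKernel_le (hαβ : 0 ≤ α + β) (u ξ : ℝ) :
    powerKernel α β δ u ξ ≤ ENNReal.ofReal (2 ^ |β|) * powerKernel 0 0 (α + β + δ) u ξ +
      ENNReal.ofReal (2 ^ |δ|) * powerKernel (α + δ) β 0 u ξ := by
  by_cases hξ : ξ ∈ Ioo 0 u
  swap
  · rw [powerKernel, indicator_of_notMem hξ]
    exact zero_le
  simp only [powerKernel, indicator_of_mem hξ, neg_zero, Real.rpow_zero, mul_one, one_mul]
  rcases le_total u (2 * ξ) with hu | hu
  · refine le_add_right ?_
    rw [← ENNReal.ofReal_mul (by positivity)]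
    exact ENNReal.ofReal_le_ofReal (rpow_mul_rpow_mul_rpow_le_of_le_two_mul hαβ hξ.2 hu)
  · refine le_add_left ?_
    rw [← ENNReal.ofReal_mul (by positivity)]
    exact ENNReal.ofReal_le_ofReal (rpow_mul_rpow_mul_rpow_le_of_two_mul_le hξ.1 hu)

end Comparison

theorem hasStrongType_powerKernel {r q : ℝ} (hr : 1 < r) (hrq : r < q)
    (hsum : α + β + δ = 1 - (1 / r - 1 / q)) (hαβ : 0 ≤ α + β) (hαδ : 1 / q < α + δ) :
    HasStrongType (powerKernel α β δ) (ENNReal.ofReal r) (ENNReal.ofReal q)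
      (volume.restrict (Ioi 0)) (volume.restrict (Ioi 0)) := by
  have hHLS := hasStrongType_powerKernel_zero_zero hr hrq hsum
  have hHardy := hasStrongType_powerKernel_zero (α := α + δ) (β := β) hr hrq.le
    (by linarith) hαδ
  refine ((hHLS.const_mul ENNReal.ofReal_ne_top).add
    (hHardy.const_mul ENNReal.ofReal_ne_top) ?_ ?_ ?_).mono
    (ae_of_all _ fun u => ae_of_all _ fun ξ => powerKernel_le hαβ u ξ)
  · exact measurable_uncurry_powerKernel.const_mul _
  · exact measurable_uncurry_powerKernel.const_mul _
  · simpa using (hr.trans hrq).le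

theorem enorm_integral_powerKernel_le (g : ℝ → ℝ) (u : ℝ) :
    ‖∫ ξ in Ioo 0 u, g ξ / (|u - ξ| ^ δ * |ξ| ^ β * |u| ^ α)‖ₑ ≤
      ∫⁻ ξ in Ioi 0, powerKernel α β δ u ξ * ‖g ξ‖ₑ := by
  rw [lintegral_powerKernel_mul]
  refine (enorm_integral_le_lintegral_enorm _).trans_eq
    (setLIntegral_congr_fun measurableSet_Ioo fun ξ hξ => ?_)
  have hξ0 : 0 < ξ := hξ.1
  have hu : 0 < u := hξ.1.trans hξ.2
  have hd : 0 < u - ξ := sub_pos.2 hξ.2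
  rw [abs_of_pos hξ0, abs_of_pos hu, abs_of_pos hd, div_eq_inv_mul, enorm_mul,
    Real.enorm_eq_ofReal (by positivity), Real.rpow_neg hd.le, Real.rpow_neg hξ0.le,
    Real.rpow_neg hu.le, ← mul_inv, ← mul_inv]

end PowerKernel

theorem stmt_8 (r q α β δ : ℝ) (hr : 1 < r) (hrq : r < q)
    (hsum : α + β + δ = 1 - (1/r - 1/q)) (hab : 0 ≤ α + β) (had : α + δ > 1/q) :
    ∃ C : ℝ≥0, ∀ g : ℝ → ℝ, Measurable g →
      eLpNorm (fun u : ℝ => ∫ ξ in Ioo (0:ℝ) u,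
          g ξ / (|u - ξ| ^ δ * |ξ| ^ β * |u| ^ α))
        (ENNReal.ofReal q) (volume.restrict (Ioi (0:ℝ)))
      ≤ C * eLpNorm g (ENNReal.ofReal r) (volume.restrict (Ioi (0:ℝ))) := by
  obtain ⟨C, hC⟩ := hasStrongType_powerKernel hr hrq hsum hab had
  refine ⟨C, fun g hg => ?_⟩
  calc _ ≤ eLpNorm (fun u => ∫⁻ ξ in Ioi 0, powerKernel α β δ u ξ * ‖g ξ‖ₑ)
          (ENNReal.ofReal q) (volume.restrict (Ioi 0)) :=
        eLpNorm_mono_enorm_ae (ae_of_all _ fun u => enorm_integral_powerKernel_le g u)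
    _ ≤ C * eLpNorm (fun ξ => ‖g ξ‖ₑ) (ENNReal.ofReal r) (volume.restrict (Ioi 0)) :=
        hC _ hg.enorm
    _ = C * eLpNorm g (ENNReal.ofReal r) (volume.restrict (Ioi 0)) := by rw [eLpNorm_enorm]
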